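/- Suppose n is odd. Then for all nonnegative integers l, k with 2l + k ≤ 3n, the following identity holds in A: O(3n−2l−k, l, k) = λ^{l+k}·O(k, l, 3n−2l−k). -/

import Mathlib

/-!
Setting: `lam n = exp(2πi/n)` is a primitive `n`-th root of unity in `ℂ`.
`DUAlg` is the graded down-up algebra `A(0,1) = ℂ⟨u,d⟩/(d²u - ud², du² - u²d)`,
with generators `uGen`, `dGen`.  The automorphism `g` (of order `2n`) is
determined by `g u = d`, `g d = lam n • u`, and generates the cyclic group `G`,
so that the fixed subring `A^G` is `{a | g a = a}`.  The orbit sum is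
`orbitSum n a b c = u^a (du)^b d^c + (lam n)^(b+c) • (d^a (ud)^b u^c)`.
-/

noncomputable section

/-- `lam n = exp(2πi/n)`, a primitive `n`-th root of unity. -/
def lam (n : ℕ) : ℂ := Complex.exp (2 * (Real.pi : ℂ) * Complex.I / (n : ℂ))

/-- The defining relations of the down-up algebra `A(0,1)`:
`d²u = ud²` and `du² = u²d` (here `0` plays the role of `u`, `1` of `d`). -/
inductive DownUpRel : FreeAlgebra ℂ (Fin 2) → FreeAlgebra ℂ (Fin 2) → Prop
  | rel1 : DownUpRel (FreeAlgebra.ι ℂ 1 * FreeAlgebra.ι ℂ 1 * FreeAlgebra.ι ℂ 0)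
      (FreeAlgebra.ι ℂ 0 * FreeAlgebra.ι ℂ 1 * FreeAlgebra.ι ℂ 1)
  | rel2 : DownUpRel (FreeAlgebra.ι ℂ 1 * FreeAlgebra.ι ℂ 0 * FreeAlgebra.ι ℂ 0)
      (FreeAlgebra.ι ℂ 0 * FreeAlgebra.ι ℂ 0 * FreeAlgebra.ι ℂ 1)

/-- The graded down-up algebra `A(0,1)`. -/
abbrev DUAlg : Type := RingQuot DownUpRel

/-- The generator `u` of `A(0,1)`. -/
def uGen : DUAlg := RingQuot.mkAlgHom ℂ DownUpRel (FreeAlgebra.ι ℂ 0)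

/-- The generator `d` of `A(0,1)`. -/
def dGen : DUAlg := RingQuot.mkAlgHom ℂ DownUpRel (FreeAlgebra.ι ℂ 1)

/-- Orbit sum `O(a,b,c) = u^a (du)^b d^c + λ^(b+c) d^a (ud)^b u^c`. -/
def orbitSum (n a b c : ℕ) : DUAlg :=
  uGen ^ a * (dGen * uGen) ^ b * dGen ^ c
    + (lam n ^ (b + c)) • (dGen ^ a * (uGen * dGen) ^ b * uGen ^ c)

/-!
Since `u²` and `d²` are central, an even power of either generator is central, while an odd power
of `d` carries `ud` to `du` across it, and an odd power of `u` carries `du` to `ud`. When `a + c`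
is odd, exactly one of `a`, `c` is even, and these two facts show that `u^a (du)^b d^c` equals the
reversed word `d^c (ud)^b u^a`. Hence `O(a,b,c)` and `O(c,b,a)` have the same two terms, with
coefficients `1, λ^(b+c)` and `λ^(b+a), 1`; these are proportional as soon as `λ^(a+2b+c) = 1`.
-/

section Monoid

variable {M : Type*} [Monoid M] {x y : M}

lemma commute_pow_of_even (hx : Commute (x ^ 2) y) {m : ℕ} (hm : Even m) : Commute (x ^ m) y := by
  obtain ⟨p, rfl⟩ := hm.two_dvd
  rw [pow_mul]
  exact hx.pow_left p

lemma semiconjBy_pow_mul_of_odd (hy : Commute (y ^ 2) x) {m : ℕ} (hm : Odd m) :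
    SemiconjBy (y ^ m) (x * y) (y * x) := by
  obtain ⟨q, rfl⟩ := hm
  have semiconj_y : SemiconjBy y (x * y) (y * x) := (mul_assoc y x y).symm
  have commute_even_pow : Commute (y ^ (2 * q)) (y * x) :=
    (Commute.pow_self y _).mul_right (commute_pow_of_even hy (even_two_mul q))
  rw [pow_succ]
  exact SemiconjBy.mul_left commute_even_pow semiconj_y

lemma pow_mul_pow_mul_pow_eq_reverse_of_even_of_odd (hx : Commute (x ^ 2) y)
    (hy : Commute (y ^ 2) x) {a c : ℕ} (ha : Even a) (hc : Odd c) (b : ℕ) :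
    x ^ a * (y * x) ^ b * y ^ c = y ^ c * (x * y) ^ b * x ^ a := by
  have commute_y : Commute (x ^ a) y := commute_pow_of_even hx ha
  have commute_yx : Commute (x ^ a) (y * x) := commute_y.mul_right (Commute.pow_self x a)
  calc x ^ a * (y * x) ^ b * y ^ c
      = (y * x) ^ b * y ^ c * x ^ a := by
        rw [mul_assoc, ((commute_yx.pow_right b).mul_right (commute_y.pow_right c)).eq]
    _ = y ^ c * (x * y) ^ b * x ^ a := by
        rw [((semiconjBy_pow_mul_of_odd hy hc).pow_right b).eq]

lemma pow_mul_pow_mul_pow_eq_reverse_of_odd_add (hx : Commute (x ^ 2) y)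
    (hy : Commute (y ^ 2) x) {a c : ℕ} (hac : Odd (a + c)) (b : ℕ) :
    x ^ a * (y * x) ^ b * y ^ c = y ^ c * (x * y) ^ b * x ^ a := by
  rcases a.even_or_odd with ha | ha
  · have hc : Odd c := (Nat.odd_add'.mp hac).mpr ha
    exact pow_mul_pow_mul_pow_eq_reverse_of_even_of_odd hx hy ha hc b
  · have hc : Even c := (Nat.odd_add.mp hac).mp ha
    exact (pow_mul_pow_mul_pow_eq_reverse_of_even_of_odd hy hx hc ha b).symm

end Monoid

lemma commute_uGen_sq_dGen : Commute (uGen ^ 2) dGen := by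
  have duu_eq_uud := RingQuot.mkAlgHom_rel ℂ DownUpRel.rel2
  simp only [map_mul] at duu_eq_uud
  rw [sq]
  exact duu_eq_uud.symm.trans (mul_assoc dGen uGen uGen)

lemma commute_dGen_sq_uGen : Commute (dGen ^ 2) uGen := by
  have ddu_eq_udd := RingQuot.mkAlgHom_rel ℂ DownUpRel.rel1
  simp only [map_mul] at ddu_eq_udd
  rw [sq]
  exact ddu_eq_udd.trans (mul_assoc uGen dGen dGen)

lemma isPrimitiveRoot_lam {n : ℕ} (hn : n ≠ 0) : IsPrimitiveRoot (lam n) n :=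
  Complex.isPrimitiveRoot_exp n hn

theorem orbitSum_rewrite_odd_general {n a b c : ℕ} (hac : Odd (a + c))
    (hdvd : n ∣ a + 2 * b + c) : orbitSum n a b c = lam n ^ (b + c) • orbitSum n c b a := by
  have n_ne_zero : n ≠ 0 := ne_zero_of_dvd_ne_zero (by have := hac.pos; omega) hdvd
  have lam_pow_mul_lam_pow : lam n ^ (b + c) * lam n ^ (b + a) = 1 := by
    rw [← pow_add, (isPrimitiveRoot_lam n_ne_zero).pow_eq_one_iff_dvd]
    convert hdvd using 1
    ring
  have eq_reverse {i j : ℕ} (hij : Odd (i + j)) :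
      uGen ^ i * (dGen * uGen) ^ b * dGen ^ j = dGen ^ j * (uGen * dGen) ^ b * uGen ^ i :=
    pow_mul_pow_mul_pow_eq_reverse_of_odd_add commute_uGen_sq_dGen commute_dGen_sq_uGen hij b
  have hca : Odd (c + a) := add_comm a c ▸ hac
  simp only [orbitSum]
  rw [smul_add, smul_smul, lam_pow_mul_lam_pow, one_smul, eq_reverse hac, eq_reverse hca, add_comm]

/-- For `n` odd and `2l + k ≤ 3n`, one has `O(3n-2l-k, l, k) = λ^(l+k) O(k, l, 3n-2l-k)`. -/
theorem orbitSum_rewrite_odd (n : ℕ) (hodd : Odd n) (l k : ℕ) (hlk : 2 * l + k ≤ 3 * n) :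
    orbitSum n (3 * n - 2 * l - k) l k =
      (lam n ^ (l + k)) • orbitSum n k l (3 * n - 2 * l - k) :=
  orbitSum_rewrite_odd_general (by grind) ⟨3, by lia⟩
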